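/- arXiv:2503.06231 — 4 statements merged into one kernel-verified Lean document; each statement's English description precedes it below -/
import Mathlib

section
/- (Transitive overlap agreement) If a window family x̂ satisfies L_stitch(x̂) = 0, then any two windows agree at every shared global timestep: for all j ≤ j' < n, i < w and i' < w with j·s + i = j'·s + i', one has x̂ j i = x̂ j' i'. -/
open scoped BigOperators

/-- Self-guidance loss: squared errors at observed positions. -/
noncomputable def Lself {C w n : ℕ}
    (x : Fin n → Fin w → EuclideanSpace ℝ (Fin C))
    (m : Fin n → Fin w → Bool)
    (xh : Fin n → Fin w → EuclideanSpace ℝ (Fin C)) : ℝ :=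
  ∑ j : Fin n, ∑ i : Fin w,
    if m j i = false then ‖xh j i - x j i‖ ^ 2 else 0

/-- Stitch loss: squared discrepancies on overlaps of consecutive windows. -/
noncomputable def Lstitch {C w n : ℕ} (s : ℕ)
    (xh : Fin n → Fin w → EuclideanSpace ℝ (Fin C)) : ℝ :=
  ∑ j : Fin n, ∑ i : Fin w,
    if h : 1 ≤ (j : ℕ) ∧ (i : ℕ) < w - s then
      ‖xh j i - xh ⟨(j : ℕ) - 1, by have := j.isLt; omega⟩
          ⟨(i : ℕ) + s, by have := h.2; omega⟩‖ ^ 2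
    else 0

/-- Conditional loss: sum of self-guidance and stitch losses. -/
noncomputable def Lcond {C w n : ℕ} (s : ℕ)
    (x : Fin n → Fin w → EuclideanSpace ℝ (Fin C))
    (m : Fin n → Fin w → Bool)
    (xh : Fin n → Fin w → EuclideanSpace ℝ (Fin C)) : ℝ :=
  Lself x m xh + Lstitch s xh

/-- A window family is real if it is extracted from a single sequence `y`
and matches the observations at observed positions. -/
def isReal {C w n : ℕ} (s : ℕ)
    (x : Fin n → Fin w → EuclideanSpace ℝ (Fin C))
    (m : Fin n → Fin w → Bool)
    (xh : Fin n → Fin w → EuclideanSpace ℝ (Fin C)) : Prop :=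
  (∃ y : ℕ → EuclideanSpace ℝ (Fin C),
      ∀ (j : Fin n) (i : Fin w), xh j i = y ((j : ℕ) * s + (i : ℕ))) ∧
  (∀ (j : Fin n) (i : Fin w), m j i = false → xh j i = x j i)

/-- Transitive overlap agreement: zero stitch loss forces any two windows to
agree at every shared global timestep. -/
theorem transitive_overlap_agreement (C w s n : ℕ) (hC : 1 ≤ C) (hw : 1 ≤ w)
    (hs1 : 1 ≤ s) (hsw : s ≤ w) (hn : 1 ≤ n)
    (xh : Fin n → Fin w → EuclideanSpace ℝ (Fin C))
    (h : Lstitch s xh = 0) :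
    ∀ (j j' : Fin n) (i i' : Fin w), (j : ℕ) ≤ (j' : ℕ) →
      (j : ℕ) * s + (i : ℕ) = (j' : ℕ) * s + (i' : ℕ) →
      xh j i = xh j' i' := by
  have key : ∀ (j : Fin n) (i : Fin w) (hc : 1 ≤ (j : ℕ) ∧ (i : ℕ) < w - s),
      xh j i = xh ⟨(j : ℕ) - 1, by have := j.isLt; omega⟩
          ⟨(i : ℕ) + s, by have := hc.2; omega⟩ := by
    intro j i hc
    unfold Lstitch at h
    have h1 := (Finset.sum_eq_zero_iff_of_nonneg (fun j _ => Finset.sum_nonneg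
      (fun i _ => by split_ifs <;> positivity))).1 h j (Finset.mem_univ j)
    have h2 := (Finset.sum_eq_zero_iff_of_nonneg
      (fun i _ => by split_ifs <;> positivity)).1 h1 i (Finset.mem_univ i)
    rw [dif_pos hc] at h2
    exact sub_eq_zero.1 (norm_eq_zero.1 (pow_eq_zero_iff (two_ne_zero)|>.1 h2))
  have main : ∀ (d : ℕ) (j j' : Fin n) (i i' : Fin w), (j' : ℕ) = (j : ℕ) + d →
      (i : ℕ) = (i' : ℕ) + d * s → xh j i = xh j' i' := by
    intro d
    induction d with
    | zero =>
      intro j j' i i' hj hi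
      have e1 : j = j' := Fin.ext (by omega)
      have e2 : i = i' := Fin.ext (by omega)
      rw [e1, e2]
    | succ d ih =>
      intro j j' i i' hj hi
      have hi2 : (i : ℕ) = (i' : ℕ) + s + d * s := by rw [hi]; ring
      have hlt := i.isLt
      rw [key j' i' ⟨by omega, by omega⟩]
      exact ih _ _ _ _ (by simp only []; omega) hi2
  intro j j' i i' hjj heq
  obtain ⟨d, hd⟩ := Nat.exists_eq_add_of_le hjj
  refine main d j j' i i' hd ?_
  rw [hd, Nat.add_mul] at heq
  omega
end

section
/- (Exact characterization of the zero-conditional-loss set) A window family x̂ is real if and only if L_cond(x̂) = 0; that is, X_real = X_cond^0. -/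
open scoped BigOperators

theorem Lself_nonneg_aux {C w n : ℕ}
    (x : Fin n → Fin w → EuclideanSpace ℝ (Fin C))
    (m : Fin n → Fin w → Bool)
    (xh : Fin n → Fin w → EuclideanSpace ℝ (Fin C)) : 0 ≤ Lself x m xh := by
  unfold Lself
  refine Finset.sum_nonneg fun j _ => Finset.sum_nonneg fun i _ => ?_
  split_ifs <;> positivity

theorem Lstitch_nonneg_aux {C w n : ℕ} (s : ℕ)
    (xh : Fin n → Fin w → EuclideanSpace ℝ (Fin C)) : 0 ≤ Lstitch s xh := by
  unfold Lstitch
  refine Finset.sum_nonneg fun j _ => Finset.sum_nonneg fun i _ => ?_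
  split_ifs <;> positivity

theorem Lself_zero_aux {C w n : ℕ}
    (x : Fin n → Fin w → EuclideanSpace ℝ (Fin C))
    (m : Fin n → Fin w → Bool)
    (xh : Fin n → Fin w → EuclideanSpace ℝ (Fin C)) (h : Lself x m xh = 0)
    (j : Fin n) (i : Fin w) (hm : m j i = false) : xh j i = x j i := by
  unfold Lself at h
  rw [Finset.sum_eq_zero_iff_of_nonneg (fun j _ => Finset.sum_nonneg fun i _ => by
    split_ifs <;> positivity)] at h
  have h1 := h j (Finset.mem_univ _)
  rw [Finset.sum_eq_zero_iff_of_nonneg (fun i _ => by split_ifs <;> positivity)] at h1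
  have h2 := h1 i (Finset.mem_univ _)
  rw [if_pos hm] at h2
  exact sub_eq_zero.1 (norm_eq_zero.1 (pow_eq_zero_iff (two_ne_zero)|>.1 h2))

theorem Lstitch_zero_aux {C w n : ℕ} (s : ℕ)
    (xh : Fin n → Fin w → EuclideanSpace ℝ (Fin C)) (h : Lstitch s xh = 0)
    (j i : ℕ) (hj : j + 1 < n) (hi : i + s < w) :
    xh ⟨j + 1, hj⟩ ⟨i, by omega⟩ = xh ⟨j, by omega⟩ ⟨i + s, hi⟩ := by
  unfold Lstitch at h
  rw [Finset.sum_eq_zero_iff_of_nonneg (fun j _ => Finset.sum_nonneg fun i _ => by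
    split_ifs <;> positivity)] at h
  have h1 := h ⟨j + 1, hj⟩ (Finset.mem_univ _)
  rw [Finset.sum_eq_zero_iff_of_nonneg (fun i _ => by split_ifs <;> positivity)] at h1
  have h2 := h1 ⟨i, by omega⟩ (Finset.mem_univ _)
  rw [dif_pos ⟨by simp, by simp only; omega⟩] at h2
  exact sub_eq_zero.1 (norm_eq_zero.1 (pow_eq_zero_iff (two_ne_zero)|>.1 h2))

theorem stitch_iter_aux {C w n : ℕ} (s : ℕ)
    (xh : Fin n → Fin w → EuclideanSpace ℝ (Fin C)) (h : Lstitch s xh = 0)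
    (j d : ℕ) : ∀ (i : ℕ) (hj : j + d < n) (hi : i + d * s < w),
    xh ⟨j + d, hj⟩ ⟨i, by omega⟩ = xh ⟨j, by omega⟩ ⟨i + d * s, hi⟩ := by
  induction d with
  | zero => intro i hj hi; simp
  | succ d ih =>
    intro i hj hi
    have e : i + (d + 1) * s = i + s + d * s := by ring
    have hi' : i + s + d * s < w := by omega
    have h1 := Lstitch_zero_aux s xh h (j + d) i hj (by omega)
    have h2 := ih (i + s) (by omega) hi'
    simp only [e]
    exact h1.trans h2

theorem stitch_le_aux {C w n : ℕ} (s : ℕ)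
    (xh : Fin n → Fin w → EuclideanSpace ℝ (Fin C)) (h : Lstitch s xh = 0)
    (j j' : Fin n) (i i' : Fin w) (hle : (j : ℕ) ≤ j')
    (e : (j : ℕ) * s + i = (j' : ℕ) * s + i') : xh j i = xh j' i' := by
  obtain ⟨j, hj⟩ := j
  obtain ⟨j', hj'⟩ := j'
  obtain ⟨i, hi⟩ := i
  obtain ⟨i', hi'⟩ := i'
  simp only at hle e
  obtain ⟨d, rfl⟩ := Nat.exists_eq_add_of_le hle
  have e2 : i = i' + d * s := by
    rw [add_mul] at e; omega
  subst e2
  exact (stitch_iter_aux s xh h j d i' hj' hi).symm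

/-- Exact characterization of the zero-conditional-loss set:
`X_real = X_cond^0`. -/
theorem real_eq_zero_cond (C w s n : ℕ) (hC : 1 ≤ C) (hw : 1 ≤ w)
    (hs1 : 1 ≤ s) (hsw : s ≤ w) (hn : 1 ≤ n)
    (x : Fin n → Fin w → EuclideanSpace ℝ (Fin C))
    (m : Fin n → Fin w → Bool) :
    {xh : Fin n → Fin w → EuclideanSpace ℝ (Fin C) | isReal s x m xh}
      = {xh | Lcond s x m xh ≤ 0} := by
  ext xh
  simp only [Set.mem_setOf_eq]
  constructor
  · rintro ⟨⟨y, hy⟩, hx⟩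
    have h1 : Lself x m xh = 0 := by
      unfold Lself
      refine Finset.sum_eq_zero fun j _ => Finset.sum_eq_zero fun i _ => ?_
      split_ifs with hm
      · simp [hx j i hm]
      · rfl
    have h2 : Lstitch s xh = 0 := by
      unfold Lstitch
      refine Finset.sum_eq_zero fun j _ => Finset.sum_eq_zero fun i _ => ?_
      split_ifs with hm
      · have e : (j : ℕ) * s + i = ((j : ℕ) - 1) * s + (i + s) := by
          obtain ⟨k, hk⟩ := Nat.exists_eq_add_of_le hm.1
          rw [hk, Nat.add_sub_cancel_left]; ring
        rw [hy, hy, e]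
        simp
      · rfl
    unfold Lcond
    rw [h1, h2]; simp
  · intro h
    unfold Lcond at h
    have n1 := Lself_nonneg_aux x m xh
    have n2 := Lstitch_nonneg_aux s xh
    have h1 : Lself x m xh = 0 := by linarith
    have h2 : Lstitch s xh = 0 := by linarith
    refine ⟨?_, Lself_zero_aux x m xh h1⟩
    classical
    refine ⟨fun k => if hk : ∃ p : Fin n × Fin w, (p.1 : ℕ) * s + p.2 = k then
      xh hk.choose.1 hk.choose.2 else 0, fun j i => ?_⟩
    have hk : ∃ p : Fin n × Fin w, (p.1 : ℕ) * s + p.2 = (j : ℕ) * s + i := ⟨(j, i), rfl⟩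
    simp only [dif_pos hk]
    have e := hk.choose_spec
    rcases le_total (j : ℕ) (hk.choose.1 : ℕ) with hl | hl
    · exact stitch_le_aux s xh h2 _ _ _ _ hl e.symm
    · exact (stitch_le_aux s xh h2 _ _ _ _ hl e).symm
end

section
/- (Zero conditional loss does not determine the sample: ambiguity of conditional generation) Suppose the observed signals are consistent, i.e., there exists a sequence y₀ : ℕ → EuclideanSpace ℝ (Fin C) with x j i = y₀ (j·s + i) for all j < n, i < w with m j i = false. Suppose further there exists a global timestep k which is covered by some window (k = j₀·s + i₀ with j₀ < n, i₀ < w) and which is missing in every window that covers it (for all j < n, i < w with j·s + i = k, m j i = true). Then there exist two distinct window families x̂₁ ≠ x̂₂ with L_cond(x̂₁) = 0 and L_cond(x̂₂) = 0. -/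
open scoped BigOperators

theorem Lcond_eq_zero_of_seq {C w n : ℕ} (s : ℕ)
    (x : Fin n → Fin w → EuclideanSpace ℝ (Fin C))
    (m : Fin n → Fin w → Bool)
    (y : ℕ → EuclideanSpace ℝ (Fin C))
    (hy : ∀ (j : Fin n) (i : Fin w), m j i = false →
        x j i = y ((j : ℕ) * s + (i : ℕ))) :
    Lcond s x m (fun j i => y ((j : ℕ) * s + (i : ℕ))) = 0 := by
  have h1 : Lself x m (fun j i => y ((j : ℕ) * s + (i : ℕ))) = 0 := by
    unfold Lself
    refine Finset.sum_eq_zero fun j _ => Finset.sum_eq_zero fun i _ => ?_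
    split_ifs with h
    · rw [hy j i h]; simp
    · rfl
  have h2 : Lstitch (w := w) (n := n) s (fun j i => y ((j : ℕ) * s + (i : ℕ))) = 0 := by
    unfold Lstitch
    refine Finset.sum_eq_zero fun j _ => Finset.sum_eq_zero fun i _ => ?_
    split_ifs with h
    · have e : ((j : ℕ) - 1) * s + ((i : ℕ) + s) = (j : ℕ) * s + (i : ℕ) := by
        obtain ⟨a, ha⟩ := Nat.exists_eq_add_of_le h.1
        rw [ha, Nat.add_sub_cancel_left]; ring
      simp [e]
    · rfl
  rw [Lcond, h1, h2, add_zero]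

/-- Ambiguity of conditional generation: if the observations are consistent
and some covered global timestep is missing in every window that covers it,
then there are two distinct window families, both with zero conditional
loss. -/
theorem zero_cond_loss_ambiguous (C w s n : ℕ) (hC : 1 ≤ C) (hw : 1 ≤ w)
    (hs1 : 1 ≤ s) (hsw : s ≤ w) (hn : 1 ≤ n)
    (x : Fin n → Fin w → EuclideanSpace ℝ (Fin C))
    (m : Fin n → Fin w → Bool)
    (y₀ : ℕ → EuclideanSpace ℝ (Fin C))
    (hy₀ : ∀ (j : Fin n) (i : Fin w), m j i = false →
        x j i = y₀ ((j : ℕ) * s + (i : ℕ)))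
    (k : ℕ) (j₀ : Fin n) (i₀ : Fin w)
    (hk : k = (j₀ : ℕ) * s + (i₀ : ℕ))
    (hmiss : ∀ (j : Fin n) (i : Fin w),
        (j : ℕ) * s + (i : ℕ) = k → m j i = true) :
    ∃ xh₁ xh₂ : Fin n → Fin w → EuclideanSpace ℝ (Fin C),
      xh₁ ≠ xh₂ ∧ Lcond s x m xh₁ = 0 ∧ Lcond s x m xh₂ = 0 := by
  have : Nonempty (Fin C) := ⟨⟨0, hC⟩⟩
  obtain ⟨v, hv⟩ := exists_ne (y₀ k)
  refine ⟨fun j i => y₀ ((j : ℕ) * s + (i : ℕ)),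
    fun j i => Function.update y₀ k v ((j : ℕ) * s + (i : ℕ)), ?_,
    Lcond_eq_zero_of_seq s x m y₀ hy₀, Lcond_eq_zero_of_seq s x m _ ?_⟩
  · intro h
    have h' := congrFun (congrFun h j₀) i₀
    simp only [← hk, Function.update_self] at h'
    exact hv h'.symm
  · intro j i hm
    have hne : (j : ℕ) * s + (i : ℕ) ≠ k := by
      intro e
      rw [hmiss j i e] at hm
      cases hm
    rw [Function.update_of_ne hne]
    exact hy₀ j i hm
end

section
/- (Reparameterisation trick: closed form of the DDPM forward process) Let x₀ ∈ ℝ and let α : ℕ → ℝ satisfy 0 < α t ≤ 1 for all t ≥ 1, and set ᾱ t = ∏_{u=1}^{t} α u (so ᾱ 0 = 1). Define a sequence of probability measures μ : ℕ → Measure ℝ by μ 0 = the Dirac measure at x₀, and for t ≥ 1, μ t is the law of √(α t) · X + √(1 − α t) · Z where X ~ μ (t−1) and Z ~ N(0,1) are independent (i.e., μ t is the pushforward of the product measure (μ (t−1)) × gaussianReal 0 1 under (p, z) ↦ √(α t)·p + √(1 − α t)·z). Then for every t ≥ 0, μ t equals the Gaussian measure with mean √(ᾱ t) · x₀ and variance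 1 − ᾱ t (interpreting the Gaussian with variance 0 as the Dirac measure at its mean). -/
open MeasureTheory ProbabilityTheory

/-- Reparameterisation trick: the DDPM forward process
`x_t = √(α_t) x_{t−1} + √(1 − α_t) ε_t` started at the Dirac measure at `x₀`
has, at every step `t`, the Gaussian law with mean `√(ᾱ_t) x₀` and variance
`1 − ᾱ_t`, where `ᾱ_t = ∏_{u=1}^{t} α_u`. -/
theorem ddpm_reparameterisation (x₀ : ℝ) (α : ℕ → ℝ)
    (hα : ∀ t, 1 ≤ t → 0 < α t ∧ α t ≤ 1)
    (abar : ℕ → ℝ) (habar : ∀ t, abar t = ∏ u ∈ Finset.Icc 1 t, α u)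
    (μ : ℕ → Measure ℝ)
    (hμ0 : μ 0 = Measure.dirac x₀)
    (hμ : ∀ t, μ (t + 1) =
      Measure.map
        (fun p : ℝ × ℝ =>
          Real.sqrt (α (t + 1)) * p.1 + Real.sqrt (1 - α (t + 1)) * p.2)
        ((μ t).prod (gaussianReal 0 1))) :
    ∀ t, μ t = gaussianReal (Real.sqrt (abar t) * x₀)
        (Real.toNNReal (1 - abar t)) := by
  have hpos : ∀ t, 0 < abar t ∧ abar t ≤ 1 := by
    intro t
    rw [habar]
    constructor
    · exact Finset.prod_pos fun u hu => (hα u (Finset.mem_Icc.1 hu).1).1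
    · exact Finset.prod_le_one (fun u hu => (hα u (Finset.mem_Icc.1 hu).1).1.le)
        fun u hu => (hα u (Finset.mem_Icc.1 hu).1).2
  intro t
  induction t with
  | zero => simp [hμ0, habar, gaussianReal_zero_var]
  | succ t ih =>
    obtain ⟨ha0, ha1⟩ := hα (t + 1) (by omega)
    obtain ⟨hb0, hb1⟩ := hpos t
    have hs : abar (t + 1) = abar t * α (t + 1) := by
      rw [habar, habar, Finset.prod_Icc_succ_top (by omega)]
    have hcomp : (fun p : ℝ × ℝ =>
        Real.sqrt (α (t + 1)) * p.1 + Real.sqrt (1 - α (t + 1)) * p.2) =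
        (fun p : ℝ × ℝ => p.1 + p.2) ∘
          Prod.map (Real.sqrt (α (t + 1)) * ·) (Real.sqrt (1 - α (t + 1)) * ·) := rfl
    rw [hμ, ih, hcomp, ← Measure.map_map (by fun_prop) (by fun_prop),
      ← Measure.map_prod_map _ _ (by fun_prop) (by fun_prop),
      gaussianReal_map_const_mul, gaussianReal_map_const_mul]
    change Measure.conv _ _ = _
    rw [gaussianReal_conv_gaussianReal]
    congr 1
    · rw [hs, Real.sqrt_mul hb0.le]
      ring
    · apply NNReal.coe_injective
      have h1 : abar t * α (t + 1) ≤ 1 := mul_le_one₀ hb1 ha0.le ha1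
      push_cast
      rw [hs, Real.coe_toNNReal _ (by linarith), Real.coe_toNNReal _ (by linarith)]
      rw [Real.sq_sqrt ha0.le, Real.sq_sqrt (by linarith)]
      ring
end
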